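/- Let A = (A_1,…,A_n) be a nonnegative vector in ℝ^n with D = n + A_1 + ⋯ + A_n > 1. Then for every continuously differentiable function f : ℝ^n → ℝ with compact support satisfying ∫_{ℝ^n_A} |f| x^A dx = 1, one has ∫_{ℝ^n_A} |f| log|f| x^A dx ≤ D · log( C_{1,n,A} ∫_{ℝ^n_A} |∇f| x^A dx ), where C_{1,n,A} = D^{−1} ( 2^k Γ(1+D/2) / (∏_{i=1}^n Γ((A_i+1)/2)) )^{1/D}. -/

import Mathlib

open MeasureTheory Real Filter

noncomputable section

/-- The positivity region `ℝ^n_A = {x : x_i > 0 whenever A_i > 0}`. -/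
def monSet {ι : Type*} [Fintype ι] (A : ι → ℝ) : Set (EuclideanSpace ℝ ι) :=
  {x | ∀ i, 0 < A i → 0 < x i}

/-- The monomial weight `x^A = ∏ |x_i|^{A_i}`. -/
def monWeight {ι : Type*} [Fintype ι] (A : ι → ℝ) (x : EuclideanSpace ℝ ι) : ℝ :=
  ∏ i, |x i| ^ A i

/-- The homogeneous dimension `D = n + A_1 + ⋯ + A_n`. -/
def monDim {ι : Type*} [Fintype ι] (A : ι → ℝ) : ℝ :=
  (Fintype.card ι : ℝ) + ∑ i, A i

/-- `k = #{i : A_i > 0}`. -/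
def monK {ι : Type*} [Fintype ι] (A : ι → ℝ) : ℕ :=
  Nat.card {i : ι // 0 < A i}

/-- `Π(A) = [ (∏ Γ((A_i+1)/2)) / 2^k ]^{2/D}`. -/
def monPi {ι : Type*} [Fintype ι] (A : ι → ℝ) : ℝ :=
  ((∏ i, Gamma ((A i + 1) / 2)) / 2 ^ monK A) ^ (2 / monDim A)

/-- `C_{1,n,A}`, the sharp constant for `p = 1`. -/
def monC1 {ι : Type*} [Fintype ι] (A : ι → ℝ) : ℝ :=
  (monDim A)⁻¹ *
    ((2 ^ monK A * Gamma (1 + monDim A / 2)) / ∏ i, Gamma ((A i + 1) / 2)) ^ (1 / monDim A)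

/-!
Write `μ = x^A dx` and `B_R` for the ball of radius `R`. The density of `μ` is log-concave, so `μ`
inherits the Prékopa-Leindler inequality from Lebesgue measure, and `μ` is homogeneous of degree
`D`. Let `v = |f| + t R (|∇f| + ε)`. For small `t` the mean value theorem gives `|f x| ≤ v y`
whenever `|x - y| < t R`, so Prékopa-Leindler for `|f|` and the indicator of `B_R` with weights
`1 / (1 + t)` and `t / (1 + t)` yields
`(1 + t) ^ D * μ(B_R) ^ (t / (1 + t)) ≤ ∫ v ^ (1 / (1 + t)) dμ`. At `t = 0` both sides are `1`, and
comparing the terms of order `t` gives `D + log μ(B_R) + ∫ |f| log |f| dμ ≤ R ∫ |∇f| dμ`. The best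
`R` produces the constant `(D * μ(B_1) ^ (1 / D))⁻¹`, and `μ(B_1)` is found by integrating
`exp (-|x| ^ 2)` in two ways: by homogeneity over balls, and as a product of one-dimensional
integrals.
-/

open scoped ENNReal Pointwise Topology

section RealLine

theorem volume_add_volume_le_volume_add_of_isCompact {K L : Set ℝ} (hK : IsCompact K)
    (hL : IsCompact L) (hK0 : K.Nonempty) (hL0 : L.Nonempty) :
    volume K + volume L ≤ volume (K + L) := by
  obtain ⟨x, hxK, hx⟩ := hK.exists_isMaxOn hK0 continuousOn_id
  obtain ⟨y, hyL, hy⟩ := hL.exists_isMinOn hL0 continuousOn_id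
  have hinter : (K + {y}) ∩ ({x} + L) ⊆ {x + y} := by
    rintro z ⟨⟨x', hx', y₀, (rfl : y₀ = y), rfl⟩, ⟨x₀, (rfl : x₀ = x), y', hy', hz⟩⟩
    have hxx' : x' ≤ x₀ := hx hx'
    have hyy' : y₀ ≤ y' := hy hy'
    exact Set.mem_singleton_iff.mpr (by linarith)
  have hdisj : AEDisjoint volume (K + {y}) ({x} + L) :=
    measure_mono_null hinter (by simp)
  calc volume K + volume L = volume (K + {y}) + volume ({x} + L) := by
        simp [Set.image_add_right, Set.image_add_left, measure_preimage_add_right,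
          measure_preimage_add]
    _ = volume ((K + {y}) ∪ ({x} + L)) :=
        (measure_union₀ (isCompact_singleton.add hL).measurableSet.nullMeasurableSet hdisj).symm
    _ ≤ volume (K + L) := measure_mono <| Set.union_subset
        (Set.add_subset_add_left (by simpa)) (Set.add_subset_add_right (by simpa))

theorem volume_add_volume_le_volume_add {E F : Set ℝ} (hE : MeasurableSet E)
    (hF : MeasurableSet F) (hE0 : E.Nonempty) (hF0 : F.Nonempty) :
    volume E + volume F ≤ volume (E + F) := by
  obtain ⟨x, hx⟩ := hE0
  obtain ⟨y, hy⟩ := hF0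
  simp_rw [hE.measure_eq_iSup_isCompact, hF.measure_eq_iSup_isCompact]
  simp_rw [iSup_and']
  refine ENNReal.biSup_add_biSup_le' ⟨∅, by simp⟩ ⟨∅, by simp⟩ ?_
  rintro K ⟨hKE, hK⟩ L ⟨hLF, hL⟩
  calc volume K + volume L ≤ volume (insert x K) + volume (insert y L) := by
        gcongr <;> exact Set.subset_insert _ _
    _ ≤ volume (insert x K + insert y L) :=
        volume_add_volume_le_volume_add_of_isCompact (hK.insert x) (hL.insert y)
          (Set.insert_nonempty _ _) (Set.insert_nonempty _ _)
    _ ≤ volume (E + F) := measure_mono <|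
        Set.add_subset_add (Set.insert_subset hx hKE) (Set.insert_subset hy hLF)

end RealLine

section LayerCake

theorem volume_Ioi_inter_ofReal_lt (y : ℝ≥0∞) :
    volume (Set.Ioi 0 ∩ {s : ℝ | ENNReal.ofReal s < y}) = y := by
  induction y with
  | top => simp
  | coe y =>
    have : Set.Ioi 0 ∩ {s : ℝ | ENNReal.ofReal s < y} = Set.Ioo 0 (y : ℝ) := by
      ext s
      simp only [Set.mem_inter_iff, Set.mem_Ioi, Set.mem_ofPred_eq, Set.mem_Ioo]
      refine and_congr_right fun hs => ?_
      rw [ENNReal.ofReal_lt_iff_lt_toReal hs.le ENNReal.coe_ne_top, ENNReal.coe_toReal]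
    simp [this]

theorem lintegral_eq_lintegral_measure_ofReal_lt {α : Type*} [MeasurableSpace α]
    {μ : Measure α} [SFinite μ] {f : α → ℝ≥0∞} (hf : Measurable f) :
    ∫⁻ x, f x ∂μ = ∫⁻ s in Set.Ioi 0, μ {x | ENNReal.ofReal s < f x} := by
  have hmeas : MeasurableSet {p : α × ℝ | ENNReal.ofReal p.2 < f p.1} :=
    measurableSet_lt (by fun_prop) (by fun_prop)
  calc ∫⁻ x, f x ∂μ = ∫⁻ x, volume.restrict (Set.Ioi 0) {s | ENNReal.ofReal s < f x} ∂μ := by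
        refine lintegral_congr fun x => ?_
        rw [Measure.restrict_apply (measurableSet_lt (by fun_prop) (by fun_prop)), Set.inter_comm,
          volume_Ioi_inter_ofReal_lt]
    _ = (μ.prod (volume.restrict (Set.Ioi 0))) {p : α × ℝ | ENNReal.ofReal p.2 < f p.1} :=
        (Measure.prod_apply hmeas).symm
    _ = ∫⁻ s in Set.Ioi 0, μ {x | ENNReal.ofReal s < f x} := Measure.prod_apply_symm hmeas

theorem measurable_measure_ofReal_lt {α : Type*} [MeasurableSpace α] (μ : Measure α)
    (f : α → ℝ≥0∞) : Measurable fun s : ℝ => μ {x | ENNReal.ofReal s < f x} :=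
  Antitone.measurable fun _ _ hst => measure_mono fun _ hx =>
    (ENNReal.ofReal_le_ofReal hst).trans_lt hx

end LayerCake

section Lebesgue

variable {a b : ℝ}

theorem ennreal_geom_mean_le_arith_mean2_weighted (ha : 0 < a) (hb : 0 < b) (hab : a + b = 1)
    (u v : ℝ≥0∞) : u ^ a * v ^ b ≤ ENNReal.ofReal a * u + ENNReal.ofReal b * v := by
  have hconj : (a⁻¹).HolderConjugate b⁻¹ :=
    Real.holderConjugate_iff.mpr ⟨(one_lt_inv₀ ha).mpr (by linarith), by simpa using hab⟩
  simpa [← ENNReal.rpow_mul, ha.ne', hb.ne', ENNReal.ofReal_inv_of_pos, ha, hb,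
    ENNReal.div_eq_inv_mul] using ENNReal.young_inequality (u ^ a) (v ^ b) hconj

/- Brunn-Minkowski for each level `s`: `a • {s < f} + b • {s < g} ⊆ {s < h}`, and having the same
supremum makes `{s < f}` and `{s < g}` nonempty for the same values of `s`. -/
theorem arith_mean_lintegral_le_of_iSup_eq_one (ha : 0 < a) (hb : 0 < b) (hab : a + b = 1)
    {f g h : ℝ → ℝ≥0∞} (hf : Measurable f) (hg : Measurable g) (hh : Measurable h)
    (hf1 : ⨆ x, f x = 1) (hg1 : ⨆ x, g x = 1)
    (H : ∀ x y, f x ^ a * g y ^ b ≤ h (a * x + b * y)) :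
    ENNReal.ofReal a * (∫⁻ x, f x) + ENNReal.ofReal b * (∫⁻ x, g x) ≤ ∫⁻ x, h x := by
  have hvol : ∀ {c : ℝ}, 0 < c → ∀ S : Set ℝ, ENNReal.ofReal c * volume S = volume (c • S) :=
    fun hc S => by simp [Measure.addHaar_smul, abs_of_pos hc]
  rw [lintegral_eq_lintegral_measure_ofReal_lt hf, lintegral_eq_lintegral_measure_ofReal_lt hg,
    lintegral_eq_lintegral_measure_ofReal_lt hh,
    ← lintegral_const_mul _ (measurable_measure_ofReal_lt _ f),
    ← lintegral_const_mul _ (measurable_measure_ofReal_lt _ g),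
    ← lintegral_add_left ((measurable_measure_ofReal_lt _ f).const_mul _)]
  refine setLIntegral_mono (measurable_measure_ofReal_lt _ h) fun s _ => ?_
  rw [hvol ha, hvol hb]
  have hmeas : ∀ {u : ℝ → ℝ≥0∞}, Measurable u → MeasurableSet {x | ENNReal.ofReal s < u x} :=
    fun hu => measurableSet_lt measurable_const hu
  rcases lt_or_ge s 1 with hs1 | hs1
  · have hne : ∀ {u : ℝ → ℝ≥0∞}, ⨆ x, u x = 1 → {x | ENNReal.ofReal s < u x}.Nonempty :=
      fun {u} hu => lt_iSup_iff.mp (show _ < ⨆ x, u x by simpa [hu] using hs1)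
    refine (volume_add_volume_le_volume_add ((hmeas hf).const_smul₀ a) ((hmeas hg).const_smul₀ b)
      (hne hf1).smul_set (hne hg1).smul_set).trans (measure_mono ?_)
    rintro _ ⟨_, ⟨x, hx : _ < f x, rfl⟩, _, ⟨y, hy : _ < g y, rfl⟩, rfl⟩
    calc ENNReal.ofReal s = ENNReal.ofReal s ^ a * ENNReal.ofReal s ^ b := by
          rw [← ENNReal.rpow_add_of_nonneg _ _ ha.le hb.le, hab, ENNReal.rpow_one]
      _ < f x ^ a * g y ^ b := by gcongr
      _ ≤ h (a • x + b • y) := H x y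
  · have hempty : ∀ {u : ℝ → ℝ≥0∞}, ⨆ x, u x = 1 → {x | ENNReal.ofReal s < u x} = ∅ :=
      fun {u} hu => Set.eq_empty_of_forall_notMem fun x hx =>
        (lt_of_lt_of_le hx ((le_iSup u x).trans hu.le)).not_ge (by simpa using hs1)
    simp [hempty hf1, hempty hg1]

theorem prekopa_leindler_real_of_iSup_ne_top (ha : 0 < a) (hb : 0 < b) (hab : a + b = 1)
    {f g h : ℝ → ℝ≥0∞} (hf : Measurable f) (hg : Measurable g) (hh : Measurable h)
    (hft : ⨆ x, f x ≠ ∞) (hgt : ⨆ x, g x ≠ ∞)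
    (H : ∀ x y, f x ^ a * g y ^ b ≤ h (a * x + b * y)) :
    (∫⁻ x, f x) ^ a * (∫⁻ x, g x) ^ b ≤ ∫⁻ x, h x := by
  set M := ⨆ x, f x with hM
  set N := ⨆ x, g x with hN
  rcases eq_or_ne M 0 with hM0 | hM0
  · simp [ENNReal.iSup_eq_zero.mp hM0, ha]
  rcases eq_or_ne N 0 with hN0 | hN0
  · simp [ENNReal.iSup_eq_zero.mp hN0, hb]
  have hmul : ∀ u v : ℝ≥0∞,
      (M⁻¹ * u) ^ a * (N⁻¹ * v) ^ b = (M ^ a * N ^ b)⁻¹ * (u ^ a * v ^ b) := fun u v => by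
    rw [ENNReal.mul_rpow_of_nonneg _ _ ha.le, ENNReal.mul_rpow_of_nonneg _ _ hb.le,
      mul_mul_mul_comm, ENNReal.inv_rpow, ENNReal.inv_rpow,
      ← ENNReal.mul_inv (Or.inr (by finiteness)) (Or.inl (by finiteness))]
  have hmean := arith_mean_lintegral_le_of_iSup_eq_one ha hb hab (hf.const_mul M⁻¹)
    (hg.const_mul N⁻¹) (hh.const_mul (M ^ a * N ^ b)⁻¹)
    (by rw [← ENNReal.mul_iSup, ← hM, ENNReal.inv_mul_cancel hM0 hft])
    (by rw [← ENNReal.mul_iSup, ← hN, ENNReal.inv_mul_cancel hN0 hgt])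
    fun x y => (hmul _ _).trans_le (by gcongr; exact H x y)
  have hscaled := (ennreal_geom_mean_le_arith_mean2_weighted ha hb hab _ _).trans hmean
  rw [lintegral_const_mul _ hf, lintegral_const_mul _ hg, lintegral_const_mul _ hh, hmul] at hscaled
  refine (ENNReal.mul_le_mul_iff_right ?_ ?_).mp hscaled
  · exact ENNReal.inv_ne_zero.mpr (by finiteness)
  · exact ENNReal.inv_ne_top.mpr (mul_ne_zero (by simp [hM0, hft]) (by simp [hN0, hgt]))

theorem tendsto_lintegral_min_natCast {α : Type*} [MeasurableSpace α] {μ : Measure α}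
    {u : α → ℝ≥0∞} (hu : Measurable u) :
    Tendsto (fun n : ℕ => ∫⁻ x, min (u x) n ∂μ) atTop (𝓝 (∫⁻ x, u x ∂μ)) :=
  lintegral_tendsto_of_tendsto_of_monotone (fun n => (hu.min measurable_const).aemeasurable)
    (Eventually.of_forall fun _ _ _ hmn => min_le_min_left _ (by exact_mod_cast hmn))
    (Eventually.of_forall fun x => by
      simpa using (tendsto_const_nhds (x := u x)).min ENNReal.tendsto_nat_nhds_top)

theorem prekopa_leindler_real (ha : 0 < a) (hb : 0 < b) (hab : a + b = 1)
    {f g h : ℝ → ℝ≥0∞} (hf : Measurable f) (hg : Measurable g) (hh : Measurable h)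
    (H : ∀ x y, f x ^ a * g y ^ b ≤ h (a * x + b * y)) :
    (∫⁻ x, f x) ^ a * (∫⁻ x, g x) ^ b ≤ ∫⁻ x, h x := by
  rcases eq_or_ne (∫⁻ x, f x) 0 with hf0 | hf0
  · simp [hf0, ha]
  rcases eq_or_ne (∫⁻ x, g x) 0 with hg0 | hg0
  · simp [hg0, hb]
  have htrunc : ∀ (u : ℝ → ℝ≥0∞) (n : ℕ), ⨆ x, min (u x) n ≠ ∞ := fun u n =>
    ne_top_of_le_ne_top (ENNReal.natCast_ne_top n) (iSup_le fun x => min_le_right _ _)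
  refine le_of_tendsto' (ENNReal.Tendsto.mul
    ((tendsto_lintegral_min_natCast hf).ennrpow_const a) (Or.inl (by simp [hf0, ha, ha.not_gt]))
    ((tendsto_lintegral_min_natCast hg).ennrpow_const b) (Or.inl (by simp [hg0, hb.not_gt])))
    fun n => ?_
  refine prekopa_leindler_real_of_iSup_ne_top ha hb hab (hf.min measurable_const)
    (hg.min measurable_const) hh (htrunc f n) (htrunc g n) fun x y => le_trans ?_ (H x y)
  gcongr <;> exact min_le_left _ _

end Lebesgue

section LogConcave

variable {E F : Type*} [AddCommMonoid E] [Module ℝ E] [AddCommMonoid F] [Module ℝ F]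

/-- Log-concavity of an extended nonnegative function, in multiplicative form; zeros of the
function are allowed, so indicators of convex sets are included. -/
def IsLogConcave (w : E → ℝ≥0∞) : Prop :=
  ∀ ⦃a b : ℝ⦄, 0 < a → 0 < b → a + b = 1 → ∀ x y, w x ^ a * w y ^ b ≤ w (a • x + b • y)

theorem IsLogConcave.comp_linearMap {w : F → ℝ≥0∞} (hw : IsLogConcave w) (L : E →ₗ[ℝ] F) :
    IsLogConcave (w ∘ L) := fun a b ha hb hab x y => by
  simpa using hw ha hb hab (L x) (L y)

theorem IsLogConcave.finsetProd {ι : Type*} {w : ι → E → ℝ≥0∞} (s : Finset ι)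
    (hw : ∀ i ∈ s, IsLogConcave (w i)) : IsLogConcave fun x => ∏ i ∈ s, w i x :=
  fun a b ha hb hab x y => by
    simp_rw [← ENNReal.prod_rpow_of_nonneg ha.le, ← ENNReal.prod_rpow_of_nonneg hb.le,
      ← Finset.prod_mul_distrib]
    exact Finset.prod_le_prod' fun i hi => hw i hi ha hb hab x y

end LogConcave

section PrekopaLeindler

variable {E F : Type*} [AddCommMonoid E] [Module ℝ E] [MeasurableSpace E]
  [AddCommMonoid F] [Module ℝ F] [MeasurableSpace F]

/-- The Prékopa-Leindler inequality for a measure on a real vector space. Functions take values in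
`ℝ≥0∞`, so that no integrability has to be assumed. -/
def SatisfiesPrekopaLeindler (μ : Measure E) : Prop :=
  ∀ ⦃a b : ℝ⦄, 0 < a → 0 < b → a + b = 1 →
    ∀ ⦃f g h : E → ℝ≥0∞⦄, Measurable f → Measurable g → Measurable h →
      (∀ x y, f x ^ a * g y ^ b ≤ h (a • x + b • y)) →
        (∫⁻ x, f x ∂μ) ^ a * (∫⁻ x, g x ∂μ) ^ b ≤ ∫⁻ x, h x ∂μ

namespace SatisfiesPrekopaLeindler

variable {μ : Measure E} {ν : Measure F}

theorem dirac (x₀ : E) : SatisfiesPrekopaLeindler (Measure.dirac x₀) :=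
  fun a b _ _ hab f g h hf hg hh H => by
    simpa [lintegral_dirac' _ hf, lintegral_dirac' _ hg, lintegral_dirac' _ hh, ← add_smul, hab]
      using H x₀ x₀

theorem smul (hμ : SatisfiesPrekopaLeindler μ) (c : ℝ≥0∞) : SatisfiesPrekopaLeindler (c • μ) :=
  fun a b ha hb hab f g h hf hg hh H => by
    simp only [lintegral_smul_measure, smul_eq_mul]
    calc (c * ∫⁻ x, f x ∂μ) ^ a * (c * ∫⁻ x, g x ∂μ) ^ b
        = (c ^ a * c ^ b) * ((∫⁻ x, f x ∂μ) ^ a * (∫⁻ x, g x ∂μ) ^ b) := by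
          rw [ENNReal.mul_rpow_of_nonneg _ _ ha.le, ENNReal.mul_rpow_of_nonneg _ _ hb.le,
            mul_mul_mul_comm]
      _ = c * ((∫⁻ x, f x ∂μ) ^ a * (∫⁻ x, g x ∂μ) ^ b) := by
          rw [← ENNReal.rpow_add_of_nonneg _ _ ha.le hb.le, hab, ENNReal.rpow_one]
      _ ≤ c * ∫⁻ x, h x ∂μ := by gcongr; exact hμ ha hb hab hf hg hh H

theorem map (hμ : SatisfiesPrekopaLeindler μ) (L : E →ₗ[ℝ] F) (hL : Measurable L) :
    SatisfiesPrekopaLeindler (μ.map L) := fun a b ha hb hab f g h hf hg hh H => by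
  rw [lintegral_map hf hL, lintegral_map hg hL, lintegral_map hh hL]
  exact hμ ha hb hab (hf.comp hL) (hg.comp hL) (hh.comp hL) fun x y => by
    simpa using H (L x) (L y)

theorem prod [SFinite ν] (hμ : SatisfiesPrekopaLeindler μ) (hν : SatisfiesPrekopaLeindler ν) :
    SatisfiesPrekopaLeindler (μ.prod ν) := fun a b ha hb hab f g h hf hg hh H => by
  rw [lintegral_prod _ hf.aemeasurable, lintegral_prod _ hg.aemeasurable,
    lintegral_prod _ hh.aemeasurable]
  refine hμ ha hb hab hf.lintegral_prod_right' hg.lintegral_prod_right' hh.lintegral_prod_right'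
    fun x y => ?_
  exact hν ha hb hab (hf.comp measurable_prodMk_left) (hg.comp measurable_prodMk_left)
    (hh.comp measurable_prodMk_left) fun x' y' => H (x, x') (y, y')

theorem withDensity (hμ : SatisfiesPrekopaLeindler μ) {w : E → ℝ≥0∞} (hw : Measurable w)
    (hlog : IsLogConcave w) : SatisfiesPrekopaLeindler (μ.withDensity w) :=
  fun a b ha hb hab f g h hf hg hh H => by
    rw [lintegral_withDensity_eq_lintegral_mul _ hw hf,
      lintegral_withDensity_eq_lintegral_mul _ hw hg,
      lintegral_withDensity_eq_lintegral_mul _ hw hh]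
    refine hμ ha hb hab (hw.mul hf) (hw.mul hg) (hw.mul hh) fun x y => ?_
    calc (w x * f x) ^ a * (w y * g y) ^ b = (w x ^ a * w y ^ b) * (f x ^ a * g y ^ b) := by
          rw [ENNReal.mul_rpow_of_nonneg _ _ ha.le, ENNReal.mul_rpow_of_nonneg _ _ hb.le,
            mul_mul_mul_comm]
      _ ≤ w (a • x + b • y) * h (a • x + b • y) := mul_le_mul' (hlog ha hb hab x y) (H x y)

end SatisfiesPrekopaLeindler

end PrekopaLeindler

section Haar

variable {E F : Type*} [NormedAddCommGroup E] [NormedSpace ℝ E] [MeasurableSpace E] [BorelSpace E]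
  [NormedAddCommGroup F] [NormedSpace ℝ F] [MeasurableSpace F] [BorelSpace F]
  [FiniteDimensional ℝ F]

theorem SatisfiesPrekopaLeindler.of_continuousLinearEquiv {μ : Measure E} [μ.IsAddHaarMeasure]
    (hμ : SatisfiesPrekopaLeindler μ) (L : E ≃L[ℝ] F) (ν : Measure F) [ν.IsAddHaarMeasure] :
    SatisfiesPrekopaLeindler ν := by
  have := L.isAddHaarMeasure_map μ
  rw [Measure.isAddLeftInvariant_eq_smul ν (μ.map L)]
  exact (hμ.map L.toLinearMap L.continuous.measurable).smul _

theorem satisfiesPrekopaLeindler_volume_pi_fin (n : ℕ) :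
    SatisfiesPrekopaLeindler (volume : Measure (Fin n → ℝ)) := by
  induction n with
  | zero =>
    rw [volume_pi, Measure.pi_of_empty]
    exact .dirac _
  | succ n ih =>
    have hreal : SatisfiesPrekopaLeindler (volume : Measure ℝ) :=
      fun _ _ ha hb hab _ _ _ hf hg hh H => prekopa_leindler_real ha hb hab hf hg hh H
    exact (hreal.prod ih).of_continuousLinearEquiv
      (ContinuousLinearEquiv.ofFinrankEq (by simp [add_comm])) volume

theorem satisfiesPrekopaLeindler_of_isAddHaarMeasure (μ : Measure F) [μ.IsAddHaarMeasure] :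
    SatisfiesPrekopaLeindler μ :=
  (satisfiesPrekopaLeindler_volume_pi_fin (Module.finrank ℝ F)).of_continuousLinearEquiv
    (ContinuousLinearEquiv.ofFinrankEq (by simp)) μ

end Haar

section GaussianIntegral

theorem lintegral_Ioi_two_mul_mul_exp_neg_sq {r : ℝ} (hr : 0 ≤ r) :
    ∫⁻ t in Set.Ioi r, ENNReal.ofReal (2 * t * exp (-t ^ 2)) = ENNReal.ofReal (exp (-r ^ 2)) := by
  have hderiv : ∀ t ∈ Set.Ici r, HasDerivAt (fun t => -exp (-t ^ 2)) (2 * t * exp (-t ^ 2)) t :=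
    fun t _ => (hasDerivAt_pow 2 t).fun_neg.exp.fun_neg.congr_deriv (by push_cast; ring)
  have hnonneg : ∀ t ∈ Set.Ioi r, 0 ≤ 2 * t * exp (-t ^ 2) := fun t ht => by
    have : 0 < t := hr.trans_lt ht
    positivity
  have hlim : Tendsto (fun t : ℝ => -exp (-t ^ 2)) atTop (𝓝 (-0)) :=
    (tendsto_exp_atBot.comp (tendsto_neg_atTop_atBot.comp (tendsto_pow_atTop two_ne_zero))).neg
  rw [← ofReal_integral_eq_lintegral_ofReal
    (integrableOn_Ioi_deriv_of_nonneg' hderiv hnonneg hlim)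
    ((ae_restrict_iff' measurableSet_Ioi).mpr (Eventually.of_forall hnonneg)),
    integral_Ioi_of_hasDerivAt_of_nonneg' hderiv hnonneg hlim]
  simp

theorem lintegral_exp_neg_norm_sq_eq_lintegral_measure_ball {E : Type*} [NormedAddCommGroup E]
    [MeasurableSpace E] [BorelSpace E] (μ : Measure E) [SFinite μ] :
    ∫⁻ x, ENNReal.ofReal (exp (-‖x‖ ^ 2)) ∂μ =
      ∫⁻ t in Set.Ioi 0, ENNReal.ofReal (2 * t * exp (-t ^ 2)) * μ (Metric.ball 0 t) := by
  set k : E → ℝ → ℝ≥0∞ := fun x t => (Set.Ioi ‖x‖).indicator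
    (fun t => ENNReal.ofReal (2 * t * exp (-t ^ 2))) t with hk
  have hkmeas : Measurable k.uncurry :=
    Measurable.indicator (f := fun p : E × ℝ => ENNReal.ofReal (2 * p.2 * exp (-p.2 ^ 2)))
      (by fun_prop) (measurableSet_lt (measurable_fst.norm) measurable_snd)
  calc ∫⁻ x, ENNReal.ofReal (exp (-‖x‖ ^ 2)) ∂μ = ∫⁻ x, (∫⁻ t, k x t) ∂μ := by
        simp_rw [hk, lintegral_indicator measurableSet_Ioi,
          lintegral_Ioi_two_mul_mul_exp_neg_sq (norm_nonneg _)]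
    _ = ∫⁻ t, ∫⁻ x, k x t ∂μ := lintegral_lintegral_swap hkmeas.aemeasurable
    _ = ∫⁻ t, ENNReal.ofReal (2 * t * exp (-t ^ 2)) * μ (Metric.ball 0 t) := by
        refine lintegral_congr fun t => ?_
        rw [← lintegral_indicator_const measurableSet_ball]
        exact lintegral_congr fun x => by simp [k, Set.indicator]
    _ = ∫⁻ t in Set.Ioi 0, ENNReal.ofReal (2 * t * exp (-t ^ 2)) * μ (Metric.ball 0 t) := by
        rw [← lintegral_indicator measurableSet_Ioi, Set.indicator_eq_self.mpr]
        refine fun t ht => Set.mem_Ioi.mpr (lt_of_not_ge fun ht0 => ht ?_)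
        simp only [Metric.ball_eq_empty.mpr ht0, measure_empty, mul_zero]

end GaussianIntegral

section Homogeneous

variable {E : Type*} [NormedAddCommGroup E] [NormedSpace ℝ E] [MeasurableSpace E] [BorelSpace E]
  {μ : Measure E} {D : ℝ}

/-- A measure homogeneous of degree `D`: the dilate `c • s` of a set `s` by `c > 0` has measure
`c ^ D * μ s`, which is encoded through the pushforward of `μ` under the dilation. -/
def IsHomogeneousMeasure (μ : Measure E) (D : ℝ) : Prop :=
  ∀ ⦃c : ℝ⦄, 0 < c → ENNReal.ofReal (c ^ D) • μ.map (c • ·) = μ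

theorem isHomogeneousMeasure_of_isAddHaarMeasure [FiniteDimensional ℝ E] (μ : Measure E)
    [μ.IsAddHaarMeasure] : IsHomogeneousMeasure μ (Module.finrank ℝ E) := fun c hc => by
  rw [Measure.map_addHaar_smul μ hc.ne', smul_smul, abs_of_pos (by positivity), Real.rpow_natCast,
    ← ENNReal.ofReal_mul (by positivity), mul_inv_cancel₀ (by positivity), ENNReal.ofReal_one,
    one_smul]

namespace IsHomogeneousMeasure

theorem lintegral_eq (hμ : IsHomogeneousMeasure μ D) {c : ℝ} (hc : 0 < c) {u : E → ℝ≥0∞}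
    (hu : Measurable u) :
    ∫⁻ x, u x ∂μ = ENNReal.ofReal (c ^ D) * ∫⁻ x, u (c • x) ∂μ := by
  conv_lhs => rw [← hμ hc]
  rw [lintegral_smul_measure, lintegral_map hu (measurable_const_smul c), smul_eq_mul]

theorem measure_ball (hμ : IsHomogeneousMeasure μ D) {r : ℝ} (hr : 0 < r) :
    μ (Metric.ball 0 r) = ENNReal.ofReal (r ^ D) * μ (Metric.ball 0 1) := by
  have hpre : (r • · : E → E) ⁻¹' Metric.ball 0 r = Metric.ball 0 1 := by
    ext x
    simp [norm_smul, abs_of_pos hr, hr]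
  conv_lhs => rw [← hμ hr]
  rw [Measure.smul_apply, Measure.map_apply (measurable_const_smul r) measurableSet_ball, hpre,
    smul_eq_mul]

theorem measure_ball_ne_zero (hμ : IsHomogeneousMeasure μ D) (hμ0 : μ ≠ 0) {r : ℝ} (hr : 0 < r) :
    μ (Metric.ball 0 r) ≠ 0 := fun h0 => hμ0 <| by
  have hball : μ (Metric.ball 0 1) = 0 := by
    simpa [hμ.measure_ball hr, (Real.rpow_pos_of_pos hr D).not_ge] using h0
  rw [← Measure.measure_univ_eq_zero, ← Metric.iUnion_ball_nat 0, measure_iUnion_null_iff]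
  refine fun n => measure_mono_null (Metric.ball_subset_ball (le_add_of_nonneg_right one_pos.le)) ?_
  rw [hμ.measure_ball n.cast_add_one_pos, hball, mul_zero]

theorem withDensity (hμ : IsHomogeneousMeasure μ D) {α : ℝ} {w : E → ℝ≥0∞} (hw : Measurable w)
    (hhom : ∀ ⦃c : ℝ⦄, 0 < c → ∀ x, w (c • x) = ENNReal.ofReal (c ^ α) * w x) :
    IsHomogeneousMeasure (μ.withDensity w) (D + α) := fun c hc => by
  refine Measure.ext_of_lintegral _ fun u hu => ?_
  have hcw : Measurable fun x => u (c • x) := hu.comp (measurable_const_smul c)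
  rw [lintegral_smul_measure, lintegral_map hu (measurable_const_smul c),
    lintegral_withDensity_eq_lintegral_mul _ hw hcw, lintegral_withDensity_eq_lintegral_mul _ hw hu,
    hμ.lintegral_eq hc (hw.mul hu), smul_eq_mul, Real.rpow_add hc,
    ENNReal.ofReal_mul (by positivity), mul_assoc, ← lintegral_const_mul _ (hw.mul hcw)]
  simp only [Pi.mul_apply, hhom hc, mul_assoc]

theorem lintegral_exp_neg_norm_sq [SFinite μ]
    (hμ : IsHomogeneousMeasure μ D) (hD : 0 < D) :
    ∫⁻ x, ENNReal.ofReal (exp (-‖x‖ ^ 2)) ∂μ =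
      ENNReal.ofReal (Gamma (1 + D / 2)) * μ (Metric.ball 0 1) := by
  have hGamma : ∫ t in Set.Ioi 0, 2 * (t ^ (D + 1) * exp (-t ^ (2 : ℝ))) = Gamma (1 + D / 2) := by
    rw [integral_const_mul, integral_rpow_mul_exp_neg_rpow two_pos (by linarith)]
    ring_nf
  calc ∫⁻ x, ENNReal.ofReal (exp (-‖x‖ ^ 2)) ∂μ
      = ∫⁻ t in Set.Ioi 0, ENNReal.ofReal (2 * (t ^ (D + 1) * exp (-t ^ (2 : ℝ)))) *
          μ (Metric.ball 0 1) := by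
        rw [lintegral_exp_neg_norm_sq_eq_lintegral_measure_ball]
        refine setLIntegral_congr_fun measurableSet_Ioi fun t (ht : 0 < t) => ?_
        rw [hμ.measure_ball ht, ← mul_assoc, ← ENNReal.ofReal_mul (by positivity),
          Real.rpow_add_one ht.ne', Real.rpow_two]
        ring_nf
    _ = ENNReal.ofReal (Gamma (1 + D / 2)) * μ (Metric.ball 0 1) := by
        rw [lintegral_mul_const _ (by fun_prop), ← ofReal_integral_eq_lintegral_ofReal, hGamma]
        · exact (integrableOn_rpow_mul_exp_neg_rpow (by linarith) (by norm_num)).const_mul 2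
        · refine (ae_restrict_iff' measurableSet_Ioi).mpr (Eventually.of_forall fun t ht => ?_)
          have : (0 : ℝ) < t := ht
          positivity

end IsHomogeneousMeasure

end Homogeneous

theorem tendsto_integral_rpow_mul_log {X : Type*} [TopologicalSpace X] [MeasurableSpace X]
    [OpensMeasurableSpace X] {μ : Measure X} [IsFiniteMeasureOnCompacts μ] {u g : X → ℝ}
    (hu : Continuous u) (hsuppu : HasCompactSupport u) (hg : Continuous g)
    (hsuppg : HasCompactSupport g) :
    Tendsto (fun t : ℝ => ∫ x, (u x + t * g x) ^ (1 + t)⁻¹ * log ((u x + t * g x) ^ (1 + t)⁻¹) ∂μ)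
      (𝓝[>] 0) (𝓝 (∫ x, u x * log (u x) ∂μ)) := by
  have hcont : ContinuousOn
      (fun t : ℝ => ∫ x, (u x + t * g x) ^ (1 + t)⁻¹ * log ((u x + t * g x) ^ (1 + t)⁻¹) ∂μ)
      (Set.Ici 0) := by
    refine continuousOn_integral_of_compact_support
      (hsuppu.isCompact.union hsuppg.isCompact) (Real.continuous_mul_log.comp_continuousOn ?_)
      fun t x (ht : 0 ≤ t) hx => ?_
    · refine ContinuousOn.rpow (by fun_prop) (ContinuousOn.inv₀ (by fun_prop) ?_) ?_
      · rintro ⟨t, x⟩ ⟨ht : 0 ≤ t, -⟩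
        positivity
      · rintro ⟨t, x⟩ ⟨ht : 0 ≤ t, -⟩
        exact Or.inr (by positivity)
    · rw [Set.mem_union, not_or] at hx
      have hexp : (1 + t)⁻¹ ≠ 0 := by positivity
      simp [hexp, image_eq_zero_of_notMem_tsupport hx.1, image_eq_zero_of_notMem_tsupport hx.2]
  simpa using
    (hcont 0 Set.self_mem_Ici).tendsto.mono_left (nhdsWithin_mono 0 Set.Ioi_subset_Ici_self)

/-- `g` bounds the slopes of `u` at every scale `t` that is small enough, uniformly in space. -/
def IsUpperSlope {X : Type*} [PseudoMetricSpace X] (u g : X → ℝ) : Prop :=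
  ∀ᶠ t in 𝓝[>] (0 : ℝ), ∀ x y, dist x y < t → u x ≤ u y + t * g y

section BrunnMinkowskiSlope

variable {E : Type*} [NormedAddCommGroup E] [NormedSpace ℝ E] [MeasurableSpace E] [BorelSpace E]
  {μ : Measure E} {D R t : ℝ}

theorem SatisfiesPrekopaLeindler.lintegral_rpow_mul_measure_ball_rpow_le
    (hPL : SatisfiesPrekopaLeindler μ) (hhom : IsHomogeneousMeasure μ D) (ht : 0 < t)
    {u v : E → ℝ≥0∞} (hu : Measurable u) (hv : Measurable v)
    (huv : ∀ x y, dist x y < t * R → u x ≤ v y) :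
    ENNReal.ofReal ((1 + t) ^ D) *
        ((∫⁻ x, u x ∂μ) ^ (1 + t)⁻¹ * μ (Metric.ball 0 R) ^ (t * (1 + t)⁻¹)) ≤
      ∫⁻ x, v x ^ (1 + t)⁻¹ ∂μ := by
  have h1t : 0 < 1 + t := by linarith
  rw [hhom.lintegral_eq h1t (hv.pow_const _), ← lintegral_indicator_one measurableSet_ball]
  gcongr
  refine hPL (by positivity) (by positivity) (by field_simp) hu
    (measurable_one.indicator measurableSet_ball) (by fun_prop) fun x y => ?_
  by_cases hy : y ∈ Metric.ball (0 : E) R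
  · have hxy : (1 + t) • ((1 + t)⁻¹ • x + (t * (1 + t)⁻¹) • y) = x + t • y := by
      rw [smul_add, smul_smul, smul_smul, mul_inv_cancel₀ h1t.ne', one_smul, mul_left_comm,
        mul_inv_cancel₀ h1t.ne', mul_one]
    have hdist : dist x (x + t • y) < t * R := by
      rw [dist_self_add_right, norm_smul, norm_of_nonneg ht.le]
      gcongr
      simpa using hy
    simpa [hy, hxy] using ENNReal.rpow_le_rpow (huv _ _ hdist) (by positivity)
  · simp [hy, show 0 < t * (1 + t)⁻¹ by positivity]

theorem add_mul_mul_log_le_rpow_one_add {p : ℝ} (hp : 0 ≤ p) (t : ℝ) :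
    p + t * (p * log p) ≤ p ^ (1 + t) := by
  rcases hp.eq_or_lt with rfl | hp
  · simpa using Real.rpow_nonneg le_rfl _
  · calc p + t * (p * log p) = p * (log p * t + 1) := by ring
      _ ≤ p * exp (log p * t) := by gcongr; exact add_one_le_exp _
      _ = p ^ (1 + t) := by rw [Real.rpow_add hp, Real.rpow_one, Real.rpow_def_of_pos hp]

theorem one_add_mul_add_log_le_rpow_mul_rpow {m : ℝ} (hm : 0 < m) (hD : 0 ≤ D) (ht : 0 ≤ t) :
    1 + t * (1 + t)⁻¹ * (D + log m) ≤ (1 + t) ^ D * m ^ (t * (1 + t)⁻¹) := by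
  have h1t : 0 < 1 + t := by linarith
  have hlog : t * (1 + t)⁻¹ ≤ log (1 + t) := by
    calc t * (1 + t)⁻¹ = 1 - (1 + t)⁻¹ := by field_simp; ring
      _ ≤ log (1 + t) := Real.one_sub_inv_le_log_of_pos h1t
  calc 1 + t * (1 + t)⁻¹ * (D + log m)
      ≤ (log (1 + t) * D + log m * (t * (1 + t)⁻¹)) + 1 := by
        linarith [mul_le_mul_of_nonneg_right hlog hD]
    _ ≤ exp (log (1 + t) * D + log m * (t * (1 + t)⁻¹)) := add_one_le_exp _
    _ = (1 + t) ^ D * m ^ (t * (1 + t)⁻¹) := by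
        rw [Real.exp_add, ← Real.rpow_def_of_pos h1t, ← Real.rpow_def_of_pos hm]

theorem SatisfiesPrekopaLeindler.rpow_mul_measureReal_ball_rpow_le_integral
    (hPL : SatisfiesPrekopaLeindler μ) (hhom : IsHomogeneousMeasure μ D) (ht : 0 < t)
    {u v : E → ℝ} (hu : Measurable u) (hu0 : ∀ x, 0 ≤ u x) (hint : ∫ x, u x ∂μ = 1)
    (hv : Measurable v) (hv0 : ∀ x, 0 ≤ v x) (hvint : Integrable (fun x => v x ^ (1 + t)⁻¹) μ)
    (huv : ∀ x y, dist x y < t * R → u x ≤ v y) :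
    (1 + t) ^ D * μ.real (Metric.ball 0 R) ^ (t * (1 + t)⁻¹) ≤ ∫ x, v x ^ (1 + t)⁻¹ ∂μ := by
  have hu1 : ∫⁻ x, ENNReal.ofReal (u x) ∂μ = 1 := by
    rw [← ofReal_integral_eq_lintegral_ofReal (.of_integral_ne_zero (by simp [hint]))
      (Eventually.of_forall hu0), hint, ENNReal.ofReal_one]
  have hscale := hPL.lintegral_rpow_mul_measure_ball_rpow_le hhom ht (R := R)
    hu.ennreal_ofReal hv.ennreal_ofReal fun x y hxy => ENNReal.ofReal_le_ofReal (huv x y hxy)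
  have hw0 : ∀ x, 0 ≤ v x ^ (1 + t)⁻¹ := fun x => Real.rpow_nonneg (hv0 x) _
  simp_rw [hu1, ENNReal.one_rpow, one_mul,
    fun x => ENNReal.ofReal_rpow_of_nonneg (hv0 x) (show 0 ≤ (1 + t)⁻¹ by positivity)] at hscale
  rw [← ofReal_integral_eq_lintegral_ofReal hvint (Eventually.of_forall hw0)] at hscale
  refine (ENNReal.ofReal_le_ofReal_iff (integral_nonneg hw0)).mp (le_trans ?_ hscale)
  rw [ENNReal.ofReal_mul (by positivity),
    ← ENNReal.ofReal_rpow_of_nonneg measureReal_nonneg (by positivity)]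
  gcongr
  exact ENNReal.ofReal_toReal_le

variable [IsFiniteMeasureOnCompacts μ] {u g : E → ℝ}

theorem SatisfiesPrekopaLeindler.add_integral_rpow_mul_log_le
    (hPL : SatisfiesPrekopaLeindler μ) (hhom : IsHomogeneousMeasure μ D) (hD : 0 ≤ D)
    (hball : 0 < μ.real (Metric.ball 0 R)) (ht : 0 < t)
    (hu : Continuous u) (hu0 : ∀ x, 0 ≤ u x) (hsuppu : HasCompactSupport u)
    (hint : ∫ x, u x ∂μ = 1) (hg : Continuous g) (hg0 : ∀ x, 0 ≤ g x)
    (hsuppg : HasCompactSupport g) (hug : ∀ x y, dist x y < t * R → u x ≤ u y + t * g y) :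
    (1 + t)⁻¹ * (D + log (μ.real (Metric.ball 0 R))) +
        ∫ x, (u x + t * g x) ^ (1 + t)⁻¹ * log ((u x + t * g x) ^ (1 + t)⁻¹) ∂μ ≤
      ∫ x, g x ∂μ := by
  have hexp : 0 < (1 + t)⁻¹ := by positivity
  set v : E → ℝ := fun x => u x + t * g x
  have hv : Continuous v := by fun_prop
  have hv0 : ∀ x, 0 ≤ v x := fun x => add_nonneg (hu0 x) (mul_nonneg ht.le (hg0 x))
  have hsuppv : HasCompactSupport v := hsuppu.add (hsuppg.mul_left (f := fun _ => t))
  set w : E → ℝ := fun x => v x ^ (1 + t)⁻¹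
  have hw : Continuous w := hv.rpow_const fun x => Or.inr hexp.le
  have hsuppw : HasCompactSupport w :=
    hsuppv.comp_left (g := fun s => s ^ (1 + t)⁻¹) (Real.zero_rpow hexp.ne')
  have hwint := hw.integrable_of_hasCompactSupport (μ := μ) hsuppw
  have hwlogint : Integrable (fun x => w x * log (w x)) μ :=
    (Real.continuous_mul_log.comp hw).integrable_of_hasCompactSupport
      (hsuppw.comp_left (g := fun s => s * log s) (by simp))
  have hentropy : ∫ x, w x ∂μ + t * ∫ x, w x * log (w x) ∂μ ≤ 1 + t * ∫ x, g x ∂μ := by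
    rw [← hint, ← integral_const_mul, ← integral_const_mul, ← integral_add hwint
      (hwlogint.const_mul t), ← integral_add (hu.integrable_of_hasCompactSupport hsuppu)
      ((hg.integrable_of_hasCompactSupport hsuppg).const_mul t)]
    refine integral_mono (hwint.add (hwlogint.const_mul t))
      (hv.integrable_of_hasCompactSupport hsuppv) fun x => ?_
    calc w x + t * (w x * log (w x)) ≤ w x ^ (1 + t) :=
          add_mul_mul_log_le_rpow_one_add (Real.rpow_nonneg (hv0 x) _) t
      _ = v x := Real.rpow_inv_rpow (hv0 x) (by positivity)
  have hmass : 1 + t * ((1 + t)⁻¹ * (D + log (μ.real (Metric.ball 0 R)))) ≤ ∫ x, w x ∂μ := by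
    rw [← mul_assoc]
    exact (one_add_mul_add_log_le_rpow_mul_rpow hball hD ht.le).trans <|
      hPL.rpow_mul_measureReal_ball_rpow_le_integral hhom ht hu.measurable hu0 hint
        hv.measurable hv0 hwint hug
  exact le_of_mul_le_mul_left (by linarith) ht

theorem SatisfiesPrekopaLeindler.add_integral_mul_log_le_of_isUpperSlope
    (hPL : SatisfiesPrekopaLeindler μ) (hhom : IsHomogeneousMeasure μ D) (hD : 0 ≤ D)
    (hR : 0 < R) (hball : 0 < μ.real (Metric.ball 0 R))
    (hu : Continuous u) (hu0 : ∀ x, 0 ≤ u x) (hsuppu : HasCompactSupport u)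
    (hint : ∫ x, u x ∂μ = 1) (hg : Continuous g) (hg0 : ∀ x, 0 ≤ g x)
    (hsuppg : HasCompactSupport g) (hug : IsUpperSlope u g) :
    D + log (μ.real (Metric.ball 0 R)) + ∫ x, u x * log (u x) ∂μ ≤ R * ∫ x, g x ∂μ := by
  have hscale : Tendsto (· * R) (𝓝[>] (0 : ℝ)) (𝓝[>] 0) :=
    tendsto_nhdsWithin_iff.mpr
      ⟨by simpa using ((continuous_mul_const R).tendsto 0).mono_left nhdsWithin_le_nhds,
        eventually_nhdsWithin_of_forall fun t (ht : 0 < t) => mul_pos ht hR⟩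
  have hfactor : Tendsto (fun t : ℝ => (1 + t)⁻¹) (𝓝[>] 0) (𝓝 1) := by
    have : ContinuousAt (fun t : ℝ => (1 + t)⁻¹) 0 :=
      ContinuousAt.inv₀ (by fun_prop) (by simp)
    simpa using this.tendsto.mono_left nhdsWithin_le_nhds
  rw [← integral_const_mul]
  have hRg : HasCompactSupport fun x => R * g x := hsuppg.mul_left (f := fun _ => R)
  have hlim := (hfactor.mul_const (D + log (μ.real (Metric.ball 0 R)))).add
    (tendsto_integral_rpow_mul_log (μ := μ) hu hsuppu (hg.const_mul R) hRg)
  rw [one_mul] at hlim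
  refine le_of_tendsto hlim ?_
  filter_upwards [hscale.eventually hug, self_mem_nhdsWithin] with t hslope (ht : 0 < t)
  exact hPL.add_integral_rpow_mul_log_le hhom hD hball ht hu hu0 hsuppu hint (by fun_prop)
    (fun x => mul_nonneg hR.le (hg0 x)) hRg
    fun x y hxy => by simpa [mul_assoc] using hslope x y hxy

end BrunnMinkowskiSlope

section Gradient

variable {E F : Type*} [NormedAddCommGroup E] [NormedSpace ℝ E] [NormedAddCommGroup F]
  [NormedSpace ℝ F] {f : E → F}

theorem norm_le_norm_add_mul_of_norm_fderiv_le {y : E} {t C : ℝ}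
    (hf : Differentiable ℝ f) (hC : ∀ z ∈ Metric.ball y t, ‖fderiv ℝ f z‖ ≤ C) {x : E}
    (hxy : dist x y < t) : ‖f x‖ ≤ ‖f y‖ + t * C := by
  have ht : 0 < t := dist_nonneg.trans_lt hxy
  have hC0 : 0 ≤ C := (norm_nonneg _).trans (hC y (Metric.mem_ball_self ht))
  have hmv : ‖f x - f y‖ ≤ C * ‖x - y‖ := (convex_ball y t).norm_image_sub_le_of_norm_fderiv_le
    (fun z _ => hf z) hC (Metric.mem_ball_self ht) hxy
  calc ‖f x‖ ≤ ‖f y‖ + ‖f x - f y‖ := norm_le_norm_add_norm_sub' _ _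
    _ ≤ ‖f y‖ + C * ‖x - y‖ := by gcongr
    _ ≤ ‖f y‖ + t * C := by rw [mul_comm, ← dist_eq_norm]; gcongr

theorem isUpperSlope_norm_of_contDiff (hf : ContDiff ℝ 1 f) (hsupp : HasCompactSupport f)
    {κ : E → ℝ} (hκ0 : ∀ x, 0 ≤ κ x) (hκ1 : ∀ x ∈ Metric.cthickening 1 (tsupport f), 1 ≤ κ x)
    {ε : ℝ} (hε : 0 < ε) : IsUpperSlope (fun x => ‖f x‖) fun x => ‖fderiv ℝ f x‖ + ε * κ x := by
  obtain ⟨δ, hδ, hunif⟩ := Metric.uniformContinuous_iff.mp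
    ((hsupp.fderiv ℝ).uniformContinuous_of_continuous (hf.continuous_fderiv one_ne_zero)) ε hε
  filter_upwards [Ioo_mem_nhdsGT (lt_min hδ one_pos)] with t ⟨ht0, ht⟩ x y hxy
  obtain ⟨htδ, ht1⟩ := lt_min_iff.mp ht
  by_cases hy : y ∈ Metric.cthickening 1 (tsupport f)
  · refine norm_le_norm_add_mul_of_norm_fderiv_le (hf.differentiable one_ne_zero)
      (fun z hz => ?_) hxy
    calc ‖fderiv ℝ f z‖ ≤ ‖fderiv ℝ f y‖ + dist (fderiv ℝ f z) (fderiv ℝ f y) := by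
          rw [dist_eq_norm]; exact norm_le_norm_add_norm_sub' _ _
      _ ≤ ‖fderiv ℝ f y‖ + ε * κ y := by
          gcongr
          exact (hunif (lt_trans hz htδ)).le.trans (le_mul_of_one_le_right hε.le (hκ1 y hy))
  · have hx : x ∉ tsupport f := fun hx => hy <|
      Metric.mem_cthickening_of_dist_le y x 1 _ hx (by rw [dist_comm]; exact (hxy.trans ht1).le)
    rw [image_eq_zero_of_notMem_tsupport hx, norm_zero]
    have := hκ0 y
    positivity

theorem exists_isUpperSlope_norm_integral_le [FiniteDimensional ℝ E] [MeasurableSpace E]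
    [BorelSpace E] (μ : Measure E) [IsFiniteMeasureOnCompacts μ] (hf : ContDiff ℝ 1 f)
    (hsupp : HasCompactSupport f) {ε : ℝ} (hε : 0 < ε) :
    ∃ g : E → ℝ, Continuous g ∧ HasCompactSupport g ∧ (∀ x, 0 ≤ g x) ∧
      IsUpperSlope (fun x => ‖f x‖) g ∧ ∫ x, g x ∂μ ≤ ∫ x, ‖fderiv ℝ f x‖ ∂μ + ε := by
  obtain ⟨κ, hκ1, -, hκsupp, hκ⟩ := exists_continuous_one_zero_of_isCompact
    (hsupp.isCompact.cthickening (r := 1)) isClosed_empty (Set.disjoint_empty _)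
  have hκ0 : 0 ≤ ∫ x, κ x ∂μ := integral_nonneg fun x => (hκ x).1
  set ε' := ε / (1 + ∫ x, κ x ∂μ)
  have hε' : 0 < ε' := by positivity
  have hf' : Continuous fun x => ‖fderiv ℝ f x‖ := (hf.continuous_fderiv one_ne_zero).norm
  have hκ' : HasCompactSupport fun x => ε' * κ x := hκsupp.mul_left (f := fun _ => ε')
  refine ⟨fun x => ‖fderiv ℝ f x‖ + ε' * κ x, by fun_prop, (hsupp.fderiv ℝ).norm.add hκ',
    fun x => add_nonneg (norm_nonneg _) (mul_nonneg hε'.le (hκ x).1),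
    isUpperSlope_norm_of_contDiff hf hsupp (fun x => (hκ x).1) (fun x hx => (hκ1 hx).ge) hε', ?_⟩
  rw [integral_add (hf'.integrable_of_hasCompactSupport (hsupp.fderiv ℝ).norm)
    ((κ.continuous.const_mul ε').integrable_of_hasCompactSupport hκ'), integral_const_mul]
  gcongr
  calc ε' * ∫ x, κ x ∂μ ≤ ε' * (1 + ∫ x, κ x ∂μ) := by gcongr; linarith
    _ = ε := div_mul_cancel₀ _ (by positivity)

end Gradient

section LogSobolev

variable {E F : Type*} [NormedAddCommGroup E] [NormedSpace ℝ E] [FiniteDimensional ℝ E]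
  [MeasurableSpace E] [BorelSpace E] [NormedAddCommGroup F] [NormedSpace ℝ F] {μ : Measure E}
  [IsFiniteMeasureOnCompacts μ] {D : ℝ} {f : E → F}

theorem add_integral_norm_mul_log_norm_le (hPL : SatisfiesPrekopaLeindler μ)
    (hhom : IsHomogeneousMeasure μ D) (hD : 0 ≤ D) (hf : ContDiff ℝ 1 f)
    (hsupp : HasCompactSupport f) (hint : ∫ x, ‖f x‖ ∂μ = 1) {R : ℝ} (hR : 0 < R)
    (hball : 0 < μ.real (Metric.ball 0 R)) :
    D + log (μ.real (Metric.ball 0 R)) + ∫ x, ‖f x‖ * log ‖f x‖ ∂μ ≤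
      R * ∫ x, ‖fderiv ℝ f x‖ ∂μ := by
  refine le_of_forall_pos_le_add fun ε hε => ?_
  obtain ⟨g, hg, hsuppg, hg0, hslope, hgint⟩ :=
    exists_isUpperSlope_norm_integral_le μ hf hsupp (show 0 < ε / R by positivity)
  calc D + log (μ.real (Metric.ball 0 R)) + ∫ x, ‖f x‖ * log ‖f x‖ ∂μ ≤ R * ∫ x, g x ∂μ :=
        hPL.add_integral_mul_log_le_of_isUpperSlope hhom hD hR hball hf.continuous.norm
          (fun x => norm_nonneg _) hsupp.norm hint hg hg0 hsuppg hslope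
    _ ≤ R * (∫ x, ‖fderiv ℝ f x‖ ∂μ + ε / R) := by gcongr
    _ = R * ∫ x, ‖fderiv ℝ f x‖ ∂μ + ε := by field_simp

theorem sub_le_mul_log_div_of_forall_add_mul_log_le {c D I : ℝ} (hD : 0 < D)
    (h : ∀ R, 0 < R → c + D * log R ≤ R * I) : c - D ≤ D * log (I / D) := by
  have hI : 0 < I := by
    by_contra! hI
    have hexp := h (exp ((1 - c) / D)) (exp_pos _)
    rw [log_exp, mul_div_cancel₀ _ hD.ne'] at hexp
    linarith [mul_nonpos_of_nonneg_of_nonpos (exp_pos ((1 - c) / D)).le hI]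
  have hopt := h (D / I) (by positivity)
  rw [← inv_div, Real.log_inv, inv_div, div_mul_cancel₀ _ hI.ne'] at hopt
  linarith

theorem integral_norm_mul_log_norm_le (hPL : SatisfiesPrekopaLeindler μ)
    (hhom : IsHomogeneousMeasure μ D) (hD : 0 < D) (hf : ContDiff ℝ 1 f)
    (hsupp : HasCompactSupport f) (hint : ∫ x, ‖f x‖ ∂μ = 1) :
    ∫ x, ‖f x‖ * log ‖f x‖ ∂μ ≤
      D * log ((D * μ.real (Metric.ball 0 1) ^ D⁻¹)⁻¹ * ∫ x, ‖fderiv ℝ f x‖ ∂μ) := by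
  set β := μ.real (Metric.ball 0 1) with hβdef
  have hβ : 0 < β := by
    have hμ0 : μ ≠ 0 := fun h => by simp [h] at hint
    exact ENNReal.toReal_pos (hhom.measure_ball_ne_zero hμ0 one_pos) measure_ball_lt_top.ne
  have hball : ∀ s, 0 < s → μ.real (Metric.ball 0 (s * (β ^ D⁻¹)⁻¹)) = s ^ D := fun s hs => by
    rw [measureReal_def, hhom.measure_ball (by positivity), ENNReal.toReal_mul, ← measureReal_def,
      ← hβdef, ENNReal.toReal_ofReal (by positivity), Real.mul_rpow hs.le (by positivity),
      Real.inv_rpow (by positivity), Real.rpow_inv_rpow hβ.le hD.ne', inv_mul_cancel_right₀ hβ.ne']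
  have hopt : ∫ x, ‖f x‖ * log ‖f x‖ ∂μ + D - D ≤
      D * log ((β ^ D⁻¹)⁻¹ * (∫ x, ‖fderiv ℝ f x‖ ∂μ) / D) := by
    refine sub_le_mul_log_div_of_forall_add_mul_log_le hD fun s hs => ?_
    have hs' := add_integral_norm_mul_log_norm_le hPL hhom hD.le hf hsupp hint
      (R := s * (β ^ D⁻¹)⁻¹) (by positivity) (by rw [hball s hs]; positivity)
    rw [hball s hs, Real.log_rpow hs, mul_assoc] at hs'
    linarith
  rwa [add_sub_cancel_right, mul_div_right_comm, div_eq_mul_inv, mul_comm (_⁻¹) D⁻¹, ← mul_inv]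
    at hopt

end LogSobolev

section Monomial

variable {ι : Type*} [Fintype ι] {A : ι → ℝ} {α : ℝ}

/-- The one-dimensional factor of the weight `x^A` restricted to `ℝ^n_A`: it is `|t| ^ α`,
cut off to `t > 0` if `α > 0`. -/
def monFactor (α t : ℝ) : ℝ :=
  {t : ℝ | 0 < α → 0 < t}.indicator (fun t => |t| ^ α) t

theorem monFactor_zero : monFactor 0 = 1 := by
  ext t
  simp [monFactor]

theorem monFactor_of_pos (hα : 0 < α) :
    monFactor α = (Set.Ioi 0).indicator fun t => t ^ α := by
  ext t
  by_cases ht : 0 < t <;> simp [monFactor, Set.indicator, hα, ht, abs_of_pos]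

theorem monFactor_nonneg (α t : ℝ) : 0 ≤ monFactor α t :=
  Set.indicator_nonneg (fun _ _ => by positivity) t

theorem measurable_monFactor (α : ℝ) : Measurable (monFactor α) := by
  refine Measurable.indicator (by fun_prop) ?_
  rw [measurableSet_setOfPred]
  fun_prop

theorem monFactor_mul (α : ℝ) {c : ℝ} (hc : 0 < c) (t : ℝ) :
    monFactor α (c * t) = c ^ α * monFactor α t := by
  simp [monFactor, Set.indicator, hc, abs_mul, abs_of_pos, Real.mul_rpow hc.le (abs_nonneg t)]

theorem isLogConcave_ofReal_monFactor (hα : 0 ≤ α) :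
    IsLogConcave fun t => ENNReal.ofReal (monFactor α t) := fun a b ha hb hab x y => by
  rcases hα.eq_or_lt with rfl | hα
  · simp [monFactor_zero]
  simp only [monFactor_of_pos hα]
  by_cases hxy : 0 < x ∧ 0 < y
  · obtain ⟨hx, hy⟩ := hxy
    have hab' : 0 < a • x + b • y := by simp only [smul_eq_mul]; positivity
    rw [Set.indicator_of_mem (Set.mem_Ioi.mpr hx), Set.indicator_of_mem (Set.mem_Ioi.mpr hy),
      Set.indicator_of_mem (Set.mem_Ioi.mpr hab'),
      ENNReal.ofReal_rpow_of_nonneg (by positivity) ha.le,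
      ENNReal.ofReal_rpow_of_nonneg (by positivity) hb.le, ← ENNReal.ofReal_mul (by positivity),
      ← Real.rpow_mul hx.le, ← Real.rpow_mul hy.le, mul_comm α a, mul_comm α b,
      Real.rpow_mul hx.le, Real.rpow_mul hy.le, ← Real.mul_rpow (by positivity) (by positivity)]
    gcongr
    exact Real.geom_mean_le_arith_mean2_weighted ha.le hb.le hx.le hy.le hab
  · rcases not_and_or.mp hxy with hx | hy
    · simp [hx, ha]
    · simp [hy, hb]

theorem integral_monFactor_mul_exp_neg_sq (hα : 0 ≤ α) :
    ∫ t, monFactor α t * exp (-t ^ 2) = Gamma ((α + 1) / 2) / if 0 < α then 2 else 1 := by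
  rcases hα.eq_or_lt with rfl | hα
  · simpa [monFactor_zero, ← Real.Gamma_one_half_eq] using integral_gaussian 1
  · have hind : (fun t => monFactor α t * exp (-t ^ 2)) =
        (Set.Ioi 0).indicator fun t => t ^ α * exp (-t ^ (2 : ℝ)) := by
      ext t
      rw [monFactor_of_pos hα, Set.indicator_mul_left, Real.rpow_two]
    rw [hind, integral_indicator measurableSet_Ioi,
      integral_rpow_mul_exp_neg_rpow two_pos (by linarith), if_pos hα]
    ring

theorem measurableSet_monSet (A : ι → ℝ) : MeasurableSet (monSet A) := by
  simp only [monSet, measurableSet_setOfPred]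
  fun_prop

theorem indicator_monSet_monWeight (A : ι → ℝ) (x : EuclideanSpace ℝ ι) :
    (monSet A).indicator (monWeight A) x = ∏ i, monFactor (A i) (x i) := by
  by_cases hx : x ∈ monSet A
  · rw [Set.indicator_of_mem hx, monWeight]
    refine Finset.prod_congr rfl fun i _ => ?_
    rw [monFactor, Set.indicator_of_mem (Set.mem_ofPred.mpr (hx i))]
  · obtain ⟨i, hi⟩ := not_forall.mp hx
    rw [Set.indicator_of_notMem hx, Finset.prod_eq_zero (Finset.mem_univ i)]
    rw [monFactor, Set.indicator_of_notMem (Set.mem_ofPred.not.mpr hi)]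

/-- The measure `x^A dx` on `ℝ^n_A`, extended by zero to `ℝ^n`. -/
def monMeasure (A : ι → ℝ) : Measure (EuclideanSpace ℝ ι) :=
  (volume.restrict (monSet A)).withDensity fun x => ENNReal.ofReal (monWeight A x)

theorem monMeasure_eq_withDensity_prod (A : ι → ℝ) :
    monMeasure A = volume.withDensity fun x => ∏ i, ENNReal.ofReal (monFactor (A i) (x i)) := by
  rw [monMeasure, ← withDensity_indicator (measurableSet_monSet A)]
  congr 1
  ext x
  rw [← ENNReal.ofReal_prod_of_nonneg fun i _ => monFactor_nonneg _ _,
    ← indicator_monSet_monWeight]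
  exact congrFun (Set.indicator_comp_of_zero ENNReal.ofReal_zero) x

theorem measurable_prod_ofReal_monFactor (A : ι → ℝ) :
    Measurable fun x : EuclideanSpace ℝ ι => ∏ i, ENNReal.ofReal (monFactor (A i) (x i)) :=
  Finset.measurable_prod _ fun i _ =>
    ((measurable_monFactor (A i)).comp (EuclideanSpace.proj i).continuous.measurable).ennreal_ofReal

theorem continuous_monWeight (hA : ∀ i, 0 ≤ A i) : Continuous (monWeight A) :=
  continuous_finsetProd _ fun i _ =>
    (EuclideanSpace.proj (𝕜 := ℝ) i).continuous.abs.rpow_const fun _ => Or.inr (hA i)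

theorem isLocallyFiniteMeasure_monMeasure (hA : ∀ i, 0 ≤ A i) :
    IsLocallyFiniteMeasure (monMeasure A) :=
  IsLocallyFiniteMeasure.withDensity_ofReal (continuous_monWeight hA)

theorem integral_monMeasure (hA : ∀ i, 0 ≤ A i) (u : EuclideanSpace ℝ ι → ℝ) :
    ∫ x, u x ∂monMeasure A = ∫ x in monSet A, u x * monWeight A x := by
  have hw0 : ∀ x, 0 ≤ monWeight A x := fun x => Finset.prod_nonneg fun _ _ => by positivity
  rw [monMeasure, integral_withDensity_eq_integral_toReal_smul
    (continuous_monWeight hA).measurable.ennreal_ofReal (by simp)]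
  simp [ENNReal.toReal_ofReal (hw0 _), mul_comm]

theorem satisfiesPrekopaLeindler_monMeasure (hA : ∀ i, 0 ≤ A i) :
    SatisfiesPrekopaLeindler (monMeasure A) := by
  rw [monMeasure_eq_withDensity_prod]
  exact (satisfiesPrekopaLeindler_of_isAddHaarMeasure volume).withDensity
    (measurable_prod_ofReal_monFactor A)
    (IsLogConcave.finsetProd _ fun i _ => (isLogConcave_ofReal_monFactor (hA i)).comp_linearMap
      (EuclideanSpace.proj (𝕜 := ℝ) i).toLinearMap)

theorem isHomogeneousMeasure_monMeasure (A : ι → ℝ) :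
    IsHomogeneousMeasure (monMeasure A) (monDim A) := by
  rw [monMeasure_eq_withDensity_prod, monDim, ← finrank_euclideanSpace (𝕜 := ℝ)]
  refine (isHomogeneousMeasure_of_isAddHaarMeasure volume).withDensity
    (measurable_prod_ofReal_monFactor A) fun c hc x => ?_
  rw [Real.rpow_sum_of_pos hc, ENNReal.ofReal_prod_of_nonneg fun i _ => by positivity,
    ← Finset.prod_mul_distrib]
  refine Finset.prod_congr rfl fun i _ => ?_
  rw [PiLp.smul_apply, smul_eq_mul, monFactor_mul _ hc, ENNReal.ofReal_mul (by positivity)]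

theorem integral_prod_monFactor_mul_exp_neg_sq (hA : ∀ i, 0 ≤ A i) :
    ∫ x : ι → ℝ, ∏ i, monFactor (A i) (x i) * exp (-x i ^ 2) =
      (∏ i, Gamma ((A i + 1) / 2)) / 2 ^ monK A := by
  rw [integral_fintype_prod_volume_eq_prod fun i t => monFactor (A i) t * exp (-t ^ 2)]
  simp_rw [fun i => integral_monFactor_mul_exp_neg_sq (hA i)]
  rw [Finset.prod_div_distrib, Finset.prod_ite, Finset.prod_const, Finset.prod_const_one, mul_one,
    monK, Nat.card_eq_fintype_card, Fintype.card_subtype]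

theorem lintegral_exp_neg_norm_sq_monMeasure (hA : ∀ i, 0 ≤ A i) :
    ∫⁻ x, ENNReal.ofReal (exp (-‖x‖ ^ 2)) ∂monMeasure A =
      ENNReal.ofReal ((∏ i, Gamma ((A i + 1) / 2)) / 2 ^ monK A) := by
  have hΓ : 0 < (∏ i, Gamma ((A i + 1) / 2)) / 2 ^ monK A :=
    div_pos (Finset.prod_pos fun i _ => Real.Gamma_pos_of_pos (by linarith [hA i])) (by positivity)
  have hint := integral_prod_monFactor_mul_exp_neg_sq hA
  rw [monMeasure_eq_withDensity_prod, lintegral_withDensity_eq_lintegral_mul _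
      (measurable_prod_ofReal_monFactor A) (by fun_prop),
    ← (PiLp.volume_preserving_toLp ι).lintegral_comp_emb
      (MeasurableEquiv.toLp 2 _).measurableEmbedding, ← hint, ofReal_integral_eq_lintegral_ofReal
      (.of_integral_ne_zero (hint ▸ hΓ.ne')) (Eventually.of_forall fun x =>
        Finset.prod_nonneg fun i _ => mul_nonneg (monFactor_nonneg _ _) (exp_pos _).le)]
  refine lintegral_congr fun x => ?_
  rw [Pi.mul_apply, ← ENNReal.ofReal_prod_of_nonneg fun i _ => monFactor_nonneg _ _,
    ← ENNReal.ofReal_mul (Finset.prod_nonneg fun i _ => monFactor_nonneg _ _),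
    EuclideanSpace.real_norm_sq_eq, ← Finset.sum_neg_distrib, Real.exp_sum,
    ← Finset.prod_mul_distrib]

theorem measureReal_monMeasure_unitBall (hA : ∀ i, 0 ≤ A i) (hD : 0 < monDim A) :
    (monMeasure A).real (Metric.ball 0 1) =
      (∏ i, Gamma ((A i + 1) / 2)) / (2 ^ monK A * Gamma (1 + monDim A / 2)) := by
  have := isLocallyFiniteMeasure_monMeasure hA
  have hΓ : 0 < Gamma (1 + monDim A / 2) := Real.Gamma_pos_of_pos (by positivity)
  have hΓA : 0 ≤ ∏ i, Gamma ((A i + 1) / 2) := Finset.prod_nonneg fun i _ =>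
    Real.Gamma_nonneg_of_nonneg (by linarith [hA i])
  have hgauss := congrArg ENNReal.toReal <|
    ((isHomogeneousMeasure_monMeasure A).lintegral_exp_neg_norm_sq hD).symm.trans
      (lintegral_exp_neg_norm_sq_monMeasure hA)
  rw [ENNReal.toReal_mul, ENNReal.toReal_ofReal hΓ.le, ENNReal.toReal_ofReal (by positivity)]
    at hgauss
  rw [← div_div, ← hgauss, mul_div_cancel_left₀ _ hΓ.ne', measureReal_def]

theorem monC1_eq_inv_monDim_mul_measureReal_unitBall (hA : ∀ i, 0 ≤ A i) (hD : 0 < monDim A) :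
    monC1 A = (monDim A * (monMeasure A).real (Metric.ball 0 1) ^ (monDim A)⁻¹)⁻¹ := by
  rw [mul_inv, ← Real.inv_rpow measureReal_nonneg, measureReal_monMeasure_unitBall hA hD, inv_div,
    monC1, one_div]

end Monomial

theorem L1_logSobolev_monomial_weight_general {ι F : Type*} [Fintype ι] [NormedAddCommGroup F]
    [NormedSpace ℝ F] (A : ι → ℝ) (hA : ∀ i, 0 ≤ A i) (hD : 0 < monDim A)
    (f : EuclideanSpace ℝ ι → F) (hf : ContDiff ℝ 1 f) (hsupp : HasCompactSupport f)
    (hnorm : ∫ x in monSet A, ‖f x‖ * monWeight A x = 1) :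
    ∫ x in monSet A, ‖f x‖ * log ‖f x‖ * monWeight A x ≤
      monDim A * log (monC1 A * ∫ x in monSet A, ‖fderiv ℝ f x‖ * monWeight A x) := by
  have := isLocallyFiniteMeasure_monMeasure hA
  rw [← integral_monMeasure hA] at hnorm
  rw [← integral_monMeasure hA fun x => ‖f x‖ * log ‖f x‖,
    ← integral_monMeasure hA fun x => ‖fderiv ℝ f x‖,
    monC1_eq_inv_monDim_mul_measureReal_unitBall hA hD]
  exact integral_norm_mul_log_norm_le (satisfiesPrekopaLeindler_monMeasure hA)
    (isHomogeneousMeasure_monMeasure A) hD hf hsupp hnorm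

/-- the sharp `L¹` logarithmic Sobolev inequality with monomial weights.
(Recall `Real.log 0 = 0`, so `|f| log |f|` vanishes where `f = 0`.) -/
theorem L1_logSobolev_monomial_weight {n : ℕ} (A : Fin n → ℝ) (hA : ∀ i, 0 ≤ A i)
    (hD : 1 < monDim A)
    (f : EuclideanSpace ℝ (Fin n) → ℝ) (hf : ContDiff ℝ 1 f) (hsupp : HasCompactSupport f)
    (hnorm : ∫ x in monSet A, |f x| * monWeight A x = 1) :
    ∫ x in monSet A, |f x| * log |f x| * monWeight A x ≤
      monDim A * log (monC1 A * ∫ x in monSet A, ‖fderiv ℝ f x‖ * monWeight A x) :=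
  L1_logSobolev_monomial_weight_general A hA (one_pos.trans hD) f hf hsupp hnorm
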